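/- Let α ∈ ℝ, d ∈ ℕ, f ∈ D_α∖{0}, and let {f_n} ⊂ D_α∖{0} with ‖f_n − f‖_α → 0. Let p_d and p_{d,n} denote the d-th optimal polynomial approximants to 1/f and 1/f_n, let M and M_n be the (d+1)×(d+1) matrices with entries ⟨S^k f, S^j f⟩_α and ⟨S^k f_n, S^j f_n⟩_α, and let b, b_n ∈ ℂ^{d+1} have entries ⟨1, S^j f⟩_α and ⟨1, S^j f_n⟩_α. Then ‖b_n − b‖ → 0, ‖M_n − M‖_F → 0, and ‖p_{d,n} − p_d‖_α → 0 as n → ∞; moreover there exist a constant C = C(d, α, f) > 0 and N ∈ ℕ such that each of these three quantities is bounded above by C·‖f_n − f‖_α for all n ≥ N. -/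

import Mathlib

open Filter Topology

noncomputable section

/-- Membership in the Dirichlet-type space `D_α`, described via Taylor coefficients. -/
def MemD (α : ℝ) (a : ℕ → ℂ) : Prop :=
  Summable (fun k : ℕ => ‖a k‖ ^ 2 * ((k : ℝ) + 1) ^ α)

/-- The norm of `D_α`, on coefficient sequences. -/
def DNorm (α : ℝ) (a : ℕ → ℂ) : ℝ :=
  Real.sqrt (∑' k : ℕ, ‖a k‖ ^ 2 * ((k : ℝ) + 1) ^ α)

/-- The inner product of `D_α`, on coefficient sequences. -/
def Dinner (α : ℝ) (a b : ℕ → ℂ) : ℂ :=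
  ∑' k : ℕ, a k * (starRingEnd ℂ) (b k) * ((((k : ℝ) + 1) ^ α : ℝ) : ℂ)

/-- Cauchy product of coefficient sequences (coefficients of the product function). -/
def mulCoeff (a b : ℕ → ℂ) : ℕ → ℂ :=
  fun k => ∑ i ∈ Finset.range (k + 1), a i * b (k - i)

/-- Coefficient sequence of the constant function `1`. -/
def oneCoeff : ℕ → ℂ := fun k => if k = 0 then 1 else 0

/-- `f` is cyclic for (the shift operator on) `D_α`: there are polynomials `p n` with
`‖p n · f - 1‖_α → 0`. -/
def Cyclic (α : ℝ) (f : ℕ → ℂ) : Prop :=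
  ∃ p : ℕ → Polynomial ℂ,
    Tendsto (fun n => DNorm α (fun k => mulCoeff (p n).coeff f k - oneCoeff k)) atTop (𝓝 0)

/-- Coefficients of `S^t f`, where `S` is the shift operator `(Sf)(z) = z f(z)`. -/
def shiftPow (t : ℕ) (a : ℕ → ℂ) : ℕ → ℂ :=
  fun k => if k < t then 0 else a (k - t)

/-- Operator norm of `S^t` on `D_α`. -/
def shiftOpNorm (α : ℝ) (t : ℕ) : ℝ :=
  sSup {r : ℝ | ∃ a : ℕ → ℂ, MemD α a ∧ DNorm α a ≤ 1 ∧ r = DNorm α (shiftPow t a)}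

/-- `p` is a `d`-th optimal polynomial approximant to `1/f` in `D_α`. -/
def IsOPA (α : ℝ) (f : ℕ → ℂ) (d : ℕ) (p : Polynomial ℂ) : Prop :=
  p.natDegree ≤ d ∧
    ∀ q : Polynomial ℂ, q.natDegree ≤ d →
      DNorm α (fun k => mulCoeff p.coeff f k - oneCoeff k) ≤
        DNorm α (fun k => mulCoeff q.coeff f k - oneCoeff k)

/-- The matrix `M` of the linear system determining the `d`-th o.p.a. to `1/f`:
`m_{j,k} = ⟨S^k f, S^j f⟩_α`. -/
def opaMatrix (α : ℝ) (d : ℕ) (f : ℕ → ℂ) : Matrix (Fin (d + 1)) (Fin (d + 1)) ℂ :=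
  Matrix.of fun j k => Dinner α (shiftPow (k : ℕ) f) (shiftPow (j : ℕ) f)

/-- The vector `b` of the linear system determining the `d`-th o.p.a. to `1/f`:
`b_j = ⟨1, S^j f⟩_α`. -/
def opaVec (α : ℝ) (d : ℕ) (f : ℕ → ℂ) : Fin (d + 1) → ℂ :=
  fun j => Dinner α oneCoeff (shiftPow (j : ℕ) f)

/-- Frobenius norm of a complex matrix. -/
def frobNorm {m n : ℕ} (M : Matrix (Fin m) (Fin n) ℂ) : ℝ :=
  Real.sqrt (∑ j, ∑ k, ‖M j k‖ ^ 2)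

/-- Euclidean norm on `ℂ^m`. -/
def euclNorm {m : ℕ} (v : Fin m → ℂ) : ℝ :=
  Real.sqrt (∑ j, ‖v j‖ ^ 2)

/-- `α`-weighted Frobenius norm: the Frobenius norm of the matrix in the orthonormal
basis `{z^k/(k+1)^{α/2}}` of the map whose matrix in `{z^k}` is `M`. -/
def wFrobNorm (α : ℝ) {m : ℕ} (M : Matrix (Fin m) (Fin m) ℂ) : ℝ :=
  Real.sqrt (∑ j, ∑ k, ‖M j k‖ ^ 2 * (((j : ℕ) : ℝ) + 1) ^ α * (((k : ℕ) : ℝ) + 1) ^ (-α))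

/-- Coefficients of the reproducing kernel of `D_α` at `w ∈ 𝔻`. -/
def kern (α : ℝ) (w : ℂ) : ℕ → ℂ :=
  fun k => (starRingEnd ℂ) w ^ k / ((((k : ℝ) + 1) ^ α : ℝ) : ℂ)

/-- The Hilbert space `ℓ²(ℕ)`. -/
abbrev Hl2 := lp (fun _ : ℕ => ℂ) 2

/-- Square root of the weight. -/
def sw (α : ℝ) (k : ℕ) : ℝ := Real.sqrt (((k : ℝ) + 1) ^ α)

lemma wpos (α : ℝ) (k : ℕ) : 0 < ((k : ℝ) + 1) ^ α := by positivity

lemma sw_pos (α : ℝ) (k : ℕ) : 0 < sw α k := Real.sqrt_pos.2 (wpos α k)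

lemma sw_sq (α : ℝ) (k : ℕ) : sw α k ^ 2 = ((k : ℝ) + 1) ^ α := Real.sq_sqrt (wpos α k).le

lemma norm_sw_mul (α : ℝ) (a : ℕ → ℂ) (k : ℕ) :
    ‖(sw α k : ℂ) * a k‖ ^ 2 = ‖a k‖ ^ 2 * ((k : ℝ) + 1) ^ α := by
  rw [norm_mul, mul_pow, Complex.norm_real, Real.norm_of_nonneg (sw_pos α k).le, sw_sq, mul_comm]

/-- Embedding of `D_α` into `ℓ²`. -/
def toL (α : ℝ) (a : ℕ → ℂ) (h : MemD α a) : Hl2 :=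
  ⟨fun k => (sw α k : ℂ) * a k, by
    apply memℓp_gen
    simp only [ENNReal.toReal_ofNat, Real.rpow_ofNat]
    simp_rw [norm_sw_mul]
    exact h⟩

lemma toL_apply (α : ℝ) (a : ℕ → ℂ) (h : MemD α a) (k : ℕ) :
    toL α a h k = (sw α k : ℂ) * a k := rfl

lemma dnorm_of (α : ℝ) (a : ℕ → ℂ) (x : Hl2) (hx : ∀ k, x k = (sw α k : ℂ) * a k) :
    DNorm α a = ‖x‖ := by
  unfold DNorm
  simp_rw [← norm_sw_mul, ← hx]
  rw [lp.norm_eq_tsum_rpow (by norm_num) x]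
  simp [Real.sqrt_eq_rpow]

lemma dinner_of (α : ℝ) (a b : ℕ → ℂ) (ha : MemD α a) (hb : MemD α b) :
    Dinner α a b = inner ℂ (toL α b hb) (toL α a ha) := by
  rw [lp.inner_eq_tsum]
  unfold Dinner
  congr 1
  ext k
  rw [toL_apply, toL_apply, ← sw_sq]
  simp only [RCLike.inner_apply, map_mul, Complex.conj_ofReal]
  push_cast
  ring

lemma memD_one (α : ℝ) : MemD α oneCoeff := by
  apply summable_of_ne_finset_zero (s := {0})
  intro k hk
  simp at hk
  simp [oneCoeff, hk]

lemma weight_shift (α : ℝ) (t k : ℕ) :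
    (((k + t : ℕ) : ℝ) + 1) ^ α ≤ ((t : ℝ) + 1) ^ |α| * ((k : ℝ) + 1) ^ α := by
  have ht : (0 : ℝ) ≤ t := by positivity
  have hk : (0 : ℝ) ≤ k := by positivity
  push_cast
  rcases le_total 0 α with h | h
  · rw [abs_of_nonneg h, ← Real.mul_rpow (by positivity) (by positivity)]
    apply Real.rpow_le_rpow (by positivity) _ h
    nlinarith [mul_nonneg ht hk]
  · calc ((k : ℝ) + t + 1) ^ α ≤ ((k : ℝ) + 1) ^ α :=
          Real.rpow_le_rpow_of_nonpos (by positivity) (by linarith) h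
      _ ≤ _ := le_mul_of_one_le_left (by positivity)
          (Real.one_le_rpow (by linarith) (abs_nonneg _))

lemma shift_term (α : ℝ) (t : ℕ) (a : ℕ → ℂ) (k : ℕ) :
    ‖shiftPow t a (k + t)‖ ^ 2 * (((k + t : ℕ) : ℝ) + 1) ^ α ≤
      ((t : ℝ) + 1) ^ |α| * (‖a k‖ ^ 2 * ((k : ℝ) + 1) ^ α) := by
  have h : shiftPow t a (k + t) = a k := by simp [shiftPow]
  rw [h]
  have := mul_le_mul_of_nonneg_left (weight_shift α t k) (sq_nonneg ‖a k‖)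
  linarith

lemma memD_shift {α : ℝ} (t : ℕ) {a : ℕ → ℂ} (h : MemD α a) : MemD α (shiftPow t a) := by
  unfold MemD at *
  rw [← summable_nat_add_iff t]
  exact Summable.of_nonneg_of_le (fun k => by positivity) (shift_term α t a)
    (h.mul_left _)

/-- Bound for the norm of `S^t`. -/
def sK (α : ℝ) (t : ℕ) : ℝ := Real.sqrt (((t : ℝ) + 1) ^ |α|)

lemma sK_nonneg (α : ℝ) (t : ℕ) : 0 ≤ sK α t := Real.sqrt_nonneg _

lemma dnorm_shift {α : ℝ} (t : ℕ) {a : ℕ → ℂ} (h : MemD α a) :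
    DNorm α (shiftPow t a) ≤ sK α t * DNorm α a := by
  unfold DNorm sK
  rw [← Real.sqrt_mul (by positivity)]
  apply Real.sqrt_le_sqrt
  have hs := memD_shift t h
  unfold MemD at h hs
  rw [← hs.sum_add_tsum_nat_add t, ← tsum_mul_left]
  have h0 : ∑ i ∈ Finset.range t, ‖shiftPow t a i‖ ^ 2 * ((i : ℝ) + 1) ^ α = 0 := by
    apply Finset.sum_eq_zero
    intro i hi
    simp [shiftPow, Finset.mem_range.1 hi]
  rw [h0, zero_add]
  exact Summable.tsum_le_tsum (shift_term α t a) ((summable_nat_add_iff t).2 hs) (h.mul_left _)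

/-- The vectors `S^t f`. -/
def vec (α : ℝ) (f : ℕ → ℂ) (h : MemD α f) (t : ℕ) : Hl2 := toL α (shiftPow t f) (memD_shift t h)

lemma norm_vec_sub {α : ℝ} (f g : ℕ → ℂ) (hf : MemD α f) (hg : MemD α g) (t : ℕ) :
    ‖vec α g hg t - vec α f hf t‖ ≤ sK α t * DNorm α (fun k => g k - f k) := by
  have hd : MemD α (fun k => g k - f k) := by
    have : Memℓp (fun k => (toL α g hg - toL α f hf) k) 2 := (toL α g hg - toL α f hf).2
    rw [memℓp_gen_iff (by norm_num)] at this
    simp only [ENNReal.toReal_ofNat, Real.rpow_ofNat] at this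
    unfold MemD
    refine this.congr fun k => ?_
    rw [← norm_sw_mul α (fun k => g k - f k)]
    congr 2
    rw [mul_sub]
    rfl
  rw [← dnorm_of α (shiftPow t (fun k => g k - f k))]
  · exact dnorm_shift t hd
  · intro k
    rw [lp.coeFn_sub, Pi.sub_apply, vec, vec, toL_apply, toL_apply]
    unfold shiftPow
    split_ifs <;> ring

lemma norm_vec {α : ℝ} (f : ℕ → ℂ) (hf : MemD α f) (t : ℕ) :
    ‖vec α f hf t‖ = DNorm α (shiftPow t f) := (dnorm_of _ _ _ fun _ => rfl).symm

/-- The synthesis operator `c ↦ ∑ c_i S^i f`. -/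
def Tsyn (α : ℝ) (d : ℕ) (f : ℕ → ℂ) (h : MemD α f) : (Fin (d + 1) → ℂ) →L[ℂ] Hl2 :=
  ∑ i : Fin (d + 1), (ContinuousLinearMap.proj (R := ℂ) (φ := fun _ : Fin (d + 1) => ℂ) i).smulRight
    (vec α f h i)

lemma Tsyn_apply (α : ℝ) (d : ℕ) (f : ℕ → ℂ) (h : MemD α f) (c : Fin (d + 1) → ℂ) :
    Tsyn α d f h c = ∑ i : Fin (d + 1), c i • vec α f h i := by
  simp [Tsyn, sum_apply]

lemma mulCoeff_eq (d : ℕ) (f : ℕ → ℂ) (a : ℕ → ℂ) (ha : ∀ i, d < i → a i = 0) (k : ℕ) :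
    mulCoeff a f k = ∑ i : Fin (d + 1), a i * shiftPow i f k := by
  rw [Fin.sum_univ_eq_sum_range (fun i => a i * shiftPow i f k) (d + 1)]
  unfold mulCoeff
  have h1 : ∑ i ∈ Finset.range (k + 1), a i * f (k - i) =
      ∑ i ∈ Finset.range (k + 1), a i * shiftPow i f k := by
    apply Finset.sum_congr rfl
    intro i hi
    have : ¬ k < i := by have := Finset.mem_range.1 hi; omega
    simp [shiftPow, this]
  rw [h1]
  have h2 : ∀ n, k + 1 ≤ n → ∑ i ∈ Finset.range (k + 1), a i * shiftPow i f k =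
      ∑ i ∈ Finset.range n, a i * shiftPow i f k := by
    intro n hn
    apply Finset.sum_subset (Finset.range_mono hn)
    intro i _ hi
    have : k < i := by
      by_contra hc
      exact hi (Finset.mem_range.2 (by omega))
    simp [shiftPow, this]
  have h3 : ∀ n, d + 1 ≤ n → ∑ i ∈ Finset.range (d + 1), a i * shiftPow i f k =
      ∑ i ∈ Finset.range n, a i * shiftPow i f k := by
    intro n hn
    apply Finset.sum_subset (Finset.range_mono hn)
    intro i _ hi
    have : d < i := by
      by_contra hc
      exact hi (Finset.mem_range.2 (by omega))
    simp [ha i this]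
  rw [h2 (max (k + 1) (d + 1)) (le_max_left _ _), h3 (max (k + 1) (d + 1)) (le_max_right _ _)]

lemma Tsyn_coord (α : ℝ) (d : ℕ) (f : ℕ → ℂ) (h : MemD α f) (q : Polynomial ℂ)
    (hq : q.natDegree ≤ d) (k : ℕ) :
    Tsyn α d f h (fun i => q.coeff i) k = (sw α k : ℂ) * mulCoeff q.coeff f k := by
  rw [mulCoeff_eq d f q.coeff
    (fun i hi => Polynomial.coeff_eq_zero_of_natDegree_lt (lt_of_le_of_lt hq hi)), Tsyn_apply,
    lp.coeFn_sum, Finset.sum_apply, Finset.mul_sum]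
  apply Finset.sum_congr rfl
  intro i _
  rw [lp.coeFn_smul, Pi.smul_apply, vec, toL_apply, smul_eq_mul]
  ring

lemma dnorm_opa (α : ℝ) (d : ℕ) (f : ℕ → ℂ) (h : MemD α f) (q : Polynomial ℂ)
    (hq : q.natDegree ≤ d) :
    DNorm α (fun k => mulCoeff q.coeff f k - oneCoeff k) =
      ‖Tsyn α d f h (fun i => q.coeff i) - toL α oneCoeff (memD_one α)‖ := by
  apply dnorm_of
  intro k
  rw [lp.coeFn_sub, Pi.sub_apply, Tsyn_coord α d f h q hq, toL_apply]
  ring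

lemma exists_poly (d : ℕ) (c : Fin (d + 1) → ℂ) :
    ∃ q : Polynomial ℂ, q.natDegree ≤ d ∧ (fun i : Fin (d + 1) => q.coeff i) = c := by
  classical
  refine ⟨Polynomial.ofFn (d + 1) c, ?_, ?_⟩
  · have := Polynomial.ofFn_natDegree_lt (Nat.le_add_left 1 d) c
    omega
  · ext i
    rw [Polynomial.ofFn_coeff_eq_val_of_lt c i.2]

lemma opa_min {α : ℝ} {d : ℕ} {f : ℕ → ℂ} (h : MemD α f) {p : Polynomial ℂ}
    (hp : IsOPA α f d p) (c : Fin (d + 1) → ℂ) :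
    ‖Tsyn α d f h (fun i => p.coeff i) - toL α oneCoeff (memD_one α)‖ ≤
      ‖Tsyn α d f h c - toL α oneCoeff (memD_one α)‖ := by
  obtain ⟨q, hq, rfl⟩ := exists_poly d c
  rw [← dnorm_opa α d f h p hp.1, ← dnorm_opa α d f h q hq]
  exact hp.2 q hq

lemma Tsyn_inj {α : ℝ} (d : ℕ) {f : ℕ → ℂ} (h : MemD α f) (hf0 : f ≠ 0) :
    LinearMap.ker (Tsyn α d f h : (Fin (d + 1) → ℂ) →ₗ[ℂ] Hl2) = ⊥ := by
  rw [LinearMap.ker_eq_bot']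
  intro c hc
  obtain ⟨q, hq, rfl⟩ := exists_poly d c
  have h0 : ∀ k, mulCoeff q.coeff f k = 0 := by
    intro k
    have h1 := Tsyn_coord α d f h q hq k
    have h2 : Tsyn α d f h (fun i => q.coeff i) = 0 := hc
    rw [h2] at h1
    have h3 : (sw α k : ℂ) ≠ 0 := by exact_mod_cast (sw_pos α k).ne'
    have h4 : (sw α k : ℂ) * mulCoeff q.coeff f k = 0 := h1.symm
    exact (mul_eq_zero.1 h4).resolve_left h3
  have h5 : PowerSeries.mk q.coeff * PowerSeries.mk f = 0 := by
    ext k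
    rw [PowerSeries.coeff_mul, Finset.Nat.sum_antidiagonal_eq_sum_range_succ_mk]
    simpa [mulCoeff] using h0 k
  rcases mul_eq_zero.1 h5 with h6 | h6
  · ext i
    have := congrArg (PowerSeries.coeff (i : ℕ)) h6
    simpa using this
  · exfalso
    apply hf0
    ext i
    have := congrArg (PowerSeries.coeff i) h6
    simpa using this

lemma Tsyn_sub {α : ℝ} (d : ℕ) (f g : ℕ → ℂ) (hf : MemD α f) (hg : MemD α g)
    (c : Fin (d + 1) → ℂ) :
    ‖Tsyn α d g hg c - Tsyn α d f hf c‖ ≤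
      (∑ i : Fin (d + 1), sK α i) * DNorm α (fun k => g k - f k) * ‖c‖ := by
  rw [Tsyn_apply, Tsyn_apply, ← Finset.sum_sub_distrib, Finset.sum_mul, Finset.sum_mul]
  refine (norm_sum_le _ _).trans (Finset.sum_le_sum fun i _ => ?_)
  rw [← smul_sub, norm_smul, mul_comm]
  exact mul_le_mul (norm_vec_sub f g hf hg i) (norm_le_pi_norm c i) (norm_nonneg _)
    (mul_nonneg (sK_nonneg _ _) (Real.sqrt_nonneg _))

/-- Abstract perturbation estimate for least squares problems. -/
lemma lsq {E H : Type*} [NormedAddCommGroup E] [NormedSpace ℂ E] [NormedAddCommGroup H]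
    [InnerProductSpace ℂ H] (T T' : E →L[ℂ] H) (e : H) (c c' : E) (m η : ℝ) (hm : 0 < m)
    (hT : ∀ x, m * ‖x‖ ≤ ‖T x‖) (hc : ∀ x, ‖T c - e‖ ≤ ‖T x - e‖)
    (hc' : ∀ x, ‖T' c' - e‖ ≤ ‖T' x - e‖) (hη : ∀ x, ‖T' x - T x‖ ≤ η * ‖x‖)
    (hηm : η ≤ m / 2) (hη0 : 0 ≤ η) :
    ‖c' - c‖ ≤ ((4 * ‖e‖ / m * ‖T‖ + ‖e‖) / m ^ 2) * η := by
  have orth : ∀ (A : E →L[ℂ] H) (a : E), (∀ x, ‖A a - e‖ ≤ ‖A x - e‖) →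
      ∀ x, inner ℂ (A a - e) (A x) = 0 := by
    intro A a ha x
    have key := (Submodule.norm_eq_iInf_iff_inner_eq_zero (𝕜 := ℂ)
      (K := LinearMap.range (A : E →ₗ[ℂ] H)) (u := e) (v := A a) ⟨a, rfl⟩).1 (by
        apply le_antisymm
        · apply le_ciInf
          rintro ⟨_, y, rfl⟩
          rw [norm_sub_rev e, norm_sub_rev e]
          exact ha y
        · exact ciInf_le ⟨0, by rintro _ ⟨y, rfl⟩; exact norm_nonneg _⟩
            (⟨A a, ⟨a, rfl⟩⟩ : LinearMap.range (A : E →ₗ[ℂ] H))) (A x) ⟨x, rfl⟩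
    rw [← neg_sub, inner_neg_left, key, neg_zero]
  have o1 := orth T c hc (c' - c)
  have o2 := orth T' c' hc' (c' - c)
  have b1 : ‖T' c' - e‖ ≤ ‖e‖ := by simpa using hc' 0
  have b2 : ‖c'‖ ≤ 4 * ‖e‖ / m := by
    rw [le_div_iff₀ hm]
    have h1 := hT c'
    have h2 := hη c'
    have h3 : ‖T c'‖ ≤ ‖T' c' - e‖ + ‖e‖ + ‖T' c' - T c'‖ := by
      have : T c' = (T' c' - e) + e - (T' c' - T c') := by abel
      calc ‖T c'‖ = ‖(T' c' - e) + e - (T' c' - T c')‖ := by rw [← this]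
        _ ≤ ‖(T' c' - e) + e‖ + ‖T' c' - T c'‖ := norm_sub_le _ _
        _ ≤ _ := by gcongr; exact norm_add_le _ _
    have h4 : η * ‖c'‖ ≤ m / 2 * ‖c'‖ := by gcongr
    nlinarith
  set δ := c' - c with hδ
  have id : inner ℂ (T δ) (T δ) =
      inner ℂ (T c' - T' c') (T δ) + inner ℂ (T' c' - e) (T δ - T' δ) := by
    have e1 : T δ = (T c' - T' c') + (T' c' - e) - (T c - e) := by
      rw [hδ, map_sub]; abel
    calc inner ℂ (T δ) (T δ) = inner ℂ ((T c' - T' c') + (T' c' - e) - (T c - e)) (T δ) := by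
          rw [← e1]
      _ = _ := by rw [inner_sub_left, inner_add_left, inner_sub_right, o1, o2, sub_zero, sub_zero]
  have h1 : ‖T δ‖ ^ 2 ≤ η * ‖c'‖ * (‖T‖ * ‖δ‖) + ‖e‖ * (η * ‖δ‖) := by
    have : ‖inner ℂ (T δ) (T δ)‖ = ‖T δ‖ ^ 2 := by
      rw [inner_self_eq_norm_sq_to_K]; simp
    rw [← this, id]
    refine (norm_add_le _ _).trans (add_le_add ?_ ?_)
    · refine (norm_inner_le_norm _ _).trans ?_
      rw [norm_sub_rev]
      exact mul_le_mul (hη c') (T.le_opNorm δ) (norm_nonneg _) (by positivity)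
    · refine (norm_inner_le_norm _ _).trans ?_
      rw [norm_sub_rev (T δ)]
      exact mul_le_mul b1 (hη δ) (norm_nonneg _) (by positivity)
  have h2 : (m * ‖δ‖) ^ 2 ≤ ‖T δ‖ ^ 2 := by gcongr; exact hT δ
  have h3 : η * ‖c'‖ * (‖T‖ * ‖δ‖) ≤ η * (4 * ‖e‖ / m) * (‖T‖ * ‖δ‖) := by gcongr
  rw [div_mul_eq_mul_div, le_div_iff₀ (by positivity)]
  rcases (norm_nonneg δ).eq_or_lt with h0 | h0
  · rw [← h0, zero_mul]; positivity
  · refine le_of_mul_le_mul_right ?_ h0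
    nlinarith

lemma dnorm_poly (α : ℝ) (d : ℕ) (p q : Polynomial ℂ) (hp : p.natDegree ≤ d)
    (hq : q.natDegree ≤ d) :
    DNorm α (fun k => q.coeff k - p.coeff k) ≤
      Real.sqrt (∑ k ∈ Finset.range (d + 1), ((k : ℝ) + 1) ^ α) *
        ‖(fun i : Fin (d + 1) => q.coeff i) - (fun i : Fin (d + 1) => p.coeff i)‖ := by
  unfold DNorm
  apply Real.sqrt_le_iff.2
  refine ⟨by positivity, ?_⟩
  rw [mul_pow, Real.sq_sqrt (by positivity), tsum_eq_sum (s := Finset.range (d + 1)),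
    Finset.sum_mul]
  · apply Finset.sum_le_sum
    intro k hk
    rw [mul_comm]
    gcongr
    exact norm_le_pi_norm ((fun i : Fin (d + 1) => q.coeff i) - (fun i : Fin (d + 1) => p.coeff i))
      ⟨k, Finset.mem_range.1 hk⟩
  · intro k hk
    have hk' : d < k := by
      by_contra hc
      exact hk (Finset.mem_range.2 (by omega))
    beta_reduce
    rw [Polynomial.coeff_eq_zero_of_natDegree_lt (lt_of_le_of_lt hp hk'),
      Polynomial.coeff_eq_zero_of_natDegree_lt (lt_of_le_of_lt hq hk')]
    simp

lemma sqrt_sum_le {ι : Type*} (s : Finset ι) (x : ι → ℝ) (hx : ∀ i, 0 ≤ x i) :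
    Real.sqrt (∑ i ∈ s, x i) ≤ ∑ i ∈ s, Real.sqrt (x i) := by
  classical
  induction s using Finset.induction_on with
  | empty => simp
  | insert i s hi ih =>
    rw [Finset.sum_insert hi, Finset.sum_insert hi]
    have h0 : 0 ≤ ∑ j ∈ s, x j := Finset.sum_nonneg fun j _ => hx j
    refine le_trans ?_ (add_le_add_right ih _)
    apply Real.sqrt_le_iff.2
    refine ⟨by positivity, ?_⟩
    have q1 := Real.sq_sqrt (hx i)
    have q2 := Real.sq_sqrt h0
    have q3 := mul_nonneg (Real.sqrt_nonneg (x i)) (Real.sqrt_nonneg (∑ j ∈ s, x j))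
    nlinarith

lemma euclNorm_le {m : ℕ} (v : Fin m → ℂ) : euclNorm v ≤ ∑ j, ‖v j‖ := by
  unfold euclNorm
  refine (sqrt_sum_le _ _ fun i => by positivity).trans (Finset.sum_le_sum fun i _ => ?_)
  rw [Real.sqrt_sq (norm_nonneg _)]

lemma frobNorm_le {m n : ℕ} (M : Matrix (Fin m) (Fin n) ℂ) : frobNorm M ≤ ∑ j, ∑ k, ‖M j k‖ := by
  unfold frobNorm
  refine (sqrt_sum_le _ _ fun i => by positivity).trans (Finset.sum_le_sum fun i _ => ?_)
  exact euclNorm_le (M i)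

lemma b_bound {α : ℝ} (d : ℕ) (f g : ℕ → ℂ) (hf : MemD α f) (hg : MemD α g) :
    euclNorm (fun j : Fin (d + 1) => opaVec α d g j - opaVec α d f j) ≤
      (∑ j : Fin (d + 1), sK α j * ‖toL α oneCoeff (memD_one α)‖) *
        DNorm α (fun k => g k - f k) := by
  refine (euclNorm_le _).trans ?_
  rw [Finset.sum_mul]
  refine Finset.sum_le_sum fun j _ => ?_
  unfold opaVec
  rw [dinner_of α _ _ (memD_one α) (memD_shift j hg),
    dinner_of α _ _ (memD_one α) (memD_shift j hf), ← inner_sub_left]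
  refine (norm_inner_le_norm _ _).trans ?_
  rw [mul_right_comm]
  gcongr
  exact norm_vec_sub f g hf hg j

lemma M_bound {α : ℝ} (d : ℕ) (f g : ℕ → ℂ) (hf : MemD α f) (hg : MemD α g)
    (h1 : DNorm α (fun k => g k - f k) ≤ 1) :
    frobNorm (opaMatrix α d g - opaMatrix α d f) ≤
      (∑ j : Fin (d + 1), ∑ k : Fin (d + 1),
        (sK α j * (‖vec α f hf k‖ + sK α k) + ‖vec α f hf j‖ * sK α k)) *
        DNorm α (fun k => g k - f k) := by
  refine (frobNorm_le _).trans ?_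
  rw [Finset.sum_mul]
  refine Finset.sum_le_sum fun j _ => ?_
  rw [Finset.sum_mul]
  refine Finset.sum_le_sum fun k _ => ?_
  have hD : 0 ≤ DNorm α (fun k => g k - f k) := Real.sqrt_nonneg _
  have e1 : (opaMatrix α d g - opaMatrix α d f) j k =
      inner ℂ (vec α g hg j - vec α f hf j) (vec α g hg k) +
        inner ℂ (vec α f hf j) (vec α g hg k - vec α f hf k) := by
    rw [Matrix.sub_apply]
    unfold opaMatrix
    rw [Matrix.of_apply, Matrix.of_apply,
      dinner_of α _ _ (memD_shift k hg) (memD_shift j hg),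
      dinner_of α _ _ (memD_shift k hf) (memD_shift j hf), inner_sub_left, inner_sub_right]
    unfold vec
    ring
  have hj := norm_vec_sub f g hf hg j
  have hk := norm_vec_sub f g hf hg k
  have hgk : ‖vec α g hg k‖ ≤ ‖vec α f hf k‖ + sK α k := by
    have a1 : ‖vec α g hg k‖ ≤ ‖vec α f hf k‖ + ‖vec α g hg k - vec α f hf k‖ := by
      have := norm_add_le (vec α f hf k) (vec α g hg k - vec α f hf k)
      simpa using this
    have a2 := mul_le_mul_of_nonneg_left h1 (sK_nonneg α k)
    linarith
  rw [e1]
  refine (norm_add_le _ _).trans ?_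
  refine (add_le_add (norm_inner_le_norm _ _) (norm_inner_le_norm _ _)).trans ?_
  have b1 := mul_le_mul hj hgk (norm_nonneg _) (mul_nonneg (sK_nonneg α j) hD)
  have b2 := mul_le_mul_of_nonneg_left hk (norm_nonneg (vec α f hf j))
  nlinarith

/-- If `f_n → f` in `D_α` (all nonzero), then `b_n → b`, `M_n → M` and `p_{d,n} → p_d`,
each at a rate `C(d,α,f) ‖f_n - f‖_α`. -/
theorem opa_convergence (α : ℝ) (d : ℕ) (f : ℕ → ℂ) (fn : ℕ → ℕ → ℂ)
    (hf : MemD α f) (hf0 : f ≠ 0)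
    (hfn : ∀ n, MemD α (fn n)) (hfn0 : ∀ n, fn n ≠ 0)
    (hconv : Tendsto (fun n => DNorm α (fun k => fn n k - f k)) atTop (𝓝 0))
    (p : Polynomial ℂ) (hp : IsOPA α f d p)
    (P : ℕ → Polynomial ℂ) (hP : ∀ n, IsOPA α (fn n) d (P n)) :
    Tendsto (fun n => euclNorm (fun j : Fin (d + 1) =>
      opaVec α d (fn n) j - opaVec α d f j)) atTop (𝓝 0) ∧
    Tendsto (fun n => frobNorm (opaMatrix α d (fn n) - opaMatrix α d f)) atTop (𝓝 0) ∧
    Tendsto (fun n => DNorm α (fun k => (P n).coeff k - p.coeff k)) atTop (𝓝 0) ∧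
    ∃ C : ℝ, 0 < C ∧ ∃ N : ℕ, ∀ n ≥ N,
      euclNorm (fun j : Fin (d + 1) => opaVec α d (fn n) j - opaVec α d f j) ≤
        C * DNorm α (fun k => fn n k - f k) ∧
      frobNorm (opaMatrix α d (fn n) - opaMatrix α d f) ≤
        C * DNorm α (fun k => fn n k - f k) ∧
      DNorm α (fun k => (P n).coeff k - p.coeff k) ≤
        C * DNorm α (fun k => fn n k - f k) := by
  set ε : ℕ → ℝ := fun n => DNorm α (fun k => fn n k - f k) with hε
  have hε0 : ∀ n, 0 ≤ ε n := fun n => Real.sqrt_nonneg _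
  suffices H : ∃ C : ℝ, 0 < C ∧ ∃ N : ℕ, ∀ n ≥ N,
      euclNorm (fun j : Fin (d + 1) => opaVec α d (fn n) j - opaVec α d f j) ≤ C * ε n ∧
      frobNorm (opaMatrix α d (fn n) - opaMatrix α d f) ≤ C * ε n ∧
      DNorm α (fun k => (P n).coeff k - p.coeff k) ≤ C * ε n by
    obtain ⟨C, hC, N, hN⟩ := H
    have hz : Tendsto (fun n => C * ε n) atTop (𝓝 0) := by
      simpa using hconv.const_mul C
    refine ⟨?_, ?_, ?_, C, hC, N, hN⟩
    · exact squeeze_zero' (Eventually.of_forall fun n => Real.sqrt_nonneg _)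
        (eventually_atTop.2 ⟨N, fun n hn => (hN n hn).1⟩) hz
    · exact squeeze_zero' (Eventually.of_forall fun n => Real.sqrt_nonneg _)
        (eventually_atTop.2 ⟨N, fun n hn => (hN n hn).2.1⟩) hz
    · exact squeeze_zero' (Eventually.of_forall fun n => Real.sqrt_nonneg _)
        (eventually_atTop.2 ⟨N, fun n hn => (hN n hn).2.2⟩) hz
  obtain ⟨K, hK, hanti⟩ := LinearMap.exists_antilipschitzWith _ (Tsyn_inj d hf hf0)
  have hKr : (0 : ℝ) < K := by exact_mod_cast hK
  set m : ℝ := (K : ℝ)⁻¹ with hm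
  have hmpos : 0 < m := inv_pos.2 hKr
  have hT : ∀ x, m * ‖x‖ ≤ ‖Tsyn α d f hf x‖ := by
    intro x
    have h1 := hanti.le_mul_dist x 0
    simp only [dist_zero_right, map_zero] at h1
    have h2 : ‖x‖ ≤ K * ‖Tsyn α d f hf x‖ := h1
    rw [hm, inv_mul_le_iff₀ hKr]
    exact h2
  set L : ℝ := ∑ i : Fin (d + 1), sK α i with hL
  have hL0 : 0 ≤ L := Finset.sum_nonneg fun i _ => sK_nonneg _ _
  have hLε : Tendsto (fun n => L * ε n) atTop (𝓝 0) := by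
    simpa using hconv.const_mul L
  have ev : ∀ᶠ n in atTop, L * ε n ≤ m / 2 ∧ ε n ≤ 1 :=
    (hLε.eventually_le_const (by positivity)).and (hconv.eventually_le_const one_pos)
  obtain ⟨N, hN⟩ := eventually_atTop.1 ev
  set e := toL α oneCoeff (memD_one α) with he
  obtain ⟨C1, hC1⟩ : ∃ C, C = ∑ j : Fin (d + 1), sK α j * ‖e‖ := ⟨_, rfl⟩
  obtain ⟨C2, hC2⟩ : ∃ C, C = ∑ j : Fin (d + 1), ∑ k : Fin (d + 1),
        (sK α j * (‖vec α f hf k‖ + sK α k) + ‖vec α f hf j‖ * sK α k) := ⟨_, rfl⟩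
  obtain ⟨C3, hC3⟩ : ∃ C, C = Real.sqrt (∑ k ∈ Finset.range (d + 1), ((k : ℝ) + 1) ^ α) *
    (((4 * ‖e‖ / m * ‖Tsyn α d f hf‖ + ‖e‖) / m ^ 2) * L) := ⟨_, rfl⟩
  refine ⟨|C1| + |C2| + |C3| + 1, by positivity, N, fun n hn => ?_⟩
  have up : ∀ c : ℝ, c ≤ |C1| + |C2| + |C3| + 1 → ∀ x, x ≤ c * ε n →
      x ≤ (|C1| + |C2| + |C3| + 1) * ε n := fun c hc x hx =>
    hx.trans (mul_le_mul_of_nonneg_right hc (hε0 n))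
  have a1 := abs_nonneg C1
  have a2 := abs_nonneg C2
  have a3 := abs_nonneg C3
  obtain ⟨hN1, hN2⟩ := hN n hn
  refine ⟨up C1 (by linarith [le_abs_self C1]) _ ?_, up C2 (by linarith [le_abs_self C2]) _ ?_,
    up C3 (by linarith [le_abs_self C3]) _ ?_⟩
  · rw [hC1]
    exact b_bound d f (fn n) hf (hfn n)
  · rw [hC2]
    exact M_bound d f (fn n) hf (hfn n) hN2
  · refine (dnorm_poly α d p (P n) hp.1 (hP n).1).trans ?_
    rw [hC3, mul_assoc]
    refine mul_le_mul_of_nonneg_left ?_ (Real.sqrt_nonneg _)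
    rw [mul_assoc]
    exact lsq (Tsyn α d f hf) (Tsyn α d (fn n) (hfn n)) e _ _ m (L * ε n) hmpos hT
      (opa_min hf hp) (opa_min (hfn n) (hP n)) (Tsyn_sub d f (fn n) hf (hfn n)) hN1
      (mul_nonneg hL0 (hε0 n))
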